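/- arXiv:2201.10418 — 2 statements merged into one kernel-verified Lean document; each statement's English description precedes it below -/
import Mathlib

section
/- A strategyproof SDS f is γ-randomly dictatorial if and only if there exist non-negative reals γ_1,…,γ_n such that: (i) ∑_{i∈N} γ_i = γ; (ii) f(R^{i:yx}, y) − f(R, y) ≥ γ_i for all alternatives x,y ∈ A, all voters i, and all profiles R in which voter i ranks x first and y second; and (iii) for every voter i there exist alternatives x, y and a profile R in which voter i ranks x first and y second with f(R^{i:yx}, y) − f(R, y) = γ_i. -/
open Finset

noncomputable section

/-- A preference profile: each voter's strict linear order on the `m`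
alternatives is encoded as a ranking permutation, where `R i x` is the rank of
alternative `x` for voter `i` (rank `0` = most preferred). Voter `i` strictly
prefers `x` to `y` iff `R i x < R i y`. -/
abbrev Profile (n m : ℕ) := Fin n → Equiv.Perm (Fin m)

/-- `F R x` is the probability that the social decision scheme `F` assigns to
alternative `x` at profile `R`; `IsSDS F` says every `F R` is a lottery. -/
def IsSDS {n m : ℕ} (F : Profile n m → Fin m → ℝ) : Prop :=
  (∀ R x, 0 ≤ F R x) ∧ ∀ R, ∑ x, F R x = 1

/-- Stochastic-dominance preference of voter `i` (with preferences as in `R`):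
lottery `p` is weakly preferred to lottery `q`. -/
def SDPref {n m : ℕ} (R : Profile n m) (i : Fin n) (p q : Fin m → ℝ) : Prop :=
  ∀ x : Fin m,
    ∑ y ∈ univ.filter (fun y => R i y < R i x), q y ≤
      ∑ y ∈ univ.filter (fun y => R i y < R i x), p y

/-- Strategyproofness: the truthful outcome is SD-preferred to any outcome
obtainable by a unilateral deviation. -/
def Strategyproof {n m : ℕ} (F : Profile n m → Fin m → ℝ) : Prop :=
  ∀ (R R' : Profile n m) (i : Fin n),
    (∀ j, j ≠ i → R j = R' j) → SDPref R i (F R) (F R')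

/-- Anonymity: permuting the voters does not change the outcome. -/
def Anonymous {n m : ℕ} (F : Profile n m → Fin m → ℝ) : Prop :=
  ∀ (π : Equiv.Perm (Fin n)) (R : Profile n m), F (fun i => R (π i)) = F R

/-- The profile obtained from `R` by relabeling the alternatives by `τ`
(in `relabel τ R`, alternative `τ x` gets the rank that `x` has in `R`). -/
def relabel {n m : ℕ} (τ : Equiv.Perm (Fin m)) (R : Profile n m) : Profile n m :=
  fun i => τ.symm.trans (R i)

/-- Neutrality: relabeling the alternatives permutes the outcome accordingly. -/
def Neutral {n m : ℕ} (F : Profile n m → Fin m → ℝ) : Prop :=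
  ∀ (τ : Equiv.Perm (Fin m)) (R : Profile n m) (x : Fin m),
    F (relabel τ R) (τ x) = F R x

/-- The supporting size `n_{xy}(R)`: the number of voters preferring `x` to `y`. -/
def suppSize {n m : ℕ} (R : Profile n m) (x y : Fin m) : ℕ :=
  (univ.filter (fun i => R i x < R i y)).card

/-- `x` is the Condorcet winner of `R`. -/
def CondorcetWinner {n m : ℕ} (R : Profile n m) (x : Fin m) : Prop :=
  ∀ y, y ≠ x → suppSize R y x < suppSize R x y

/-- `α`-Condorcet-consistency. -/
def CondorcetConsistent {n m : ℕ} (F : Profile n m → Fin m → ℝ) (α : ℝ) : Prop :=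
  ∀ R x, CondorcetWinner R x → α ≤ F R x

/-- `x` is Pareto-dominated in `R`. -/
def ParetoDominated {n m : ℕ} (R : Profile n m) (x : Fin m) : Prop :=
  ∃ y, ∀ i, R i y < R i x

/-- `β`-ex post efficiency. -/
def ExPostEff {n m : ℕ} (F : Profile n m → Fin m → ℝ) (β : ℝ) : Prop :=
  ∀ R x, ParetoDominated R x → F R x ≤ β

/-- The probability that the dictatorial SDS of voter `i` assigns to `x`:
`1` if `x` is voter `i`'s most preferred alternative and `0` otherwise. -/
def dictProb {n m : ℕ} (R : Profile n m) (i : Fin n) (x : Fin m) : ℝ :=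
  if ∀ y, R i x ≤ R i y then 1 else 0

/-- `d` is a random dictatorship. -/
def IsRandDict {n m : ℕ} (d : Profile n m → Fin m → ℝ) : Prop :=
  ∃ δ : Fin n → ℝ, (∀ i, 0 ≤ δ i) ∧ ∑ i, δ i = 1 ∧
    ∀ R x, d R x = ∑ i, δ i * dictProb R i x

/-- `F` can be written as `γ d + (1 - γ) g` with `d` a random dictatorship and
`g` a strategyproof SDS. -/
def DecomposesAt {n m : ℕ} (F : Profile n m → Fin m → ℝ) (γ : ℝ) : Prop :=
  ∃ d g : Profile n m → Fin m → ℝ, IsRandDict d ∧ IsSDS g ∧ Strategyproof g ∧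
    ∀ R x, F R x = γ * d R x + (1 - γ) * g R x

/-- `F` is `γ`-randomly dictatorial: `γ ∈ [0,1]` is the maximal value admitting
a decomposition `F = γ d + (1 - γ) g` as above. -/
def RandDictDegree {n m : ℕ} (F : Profile n m → Fin m → ℝ) (γ : ℝ) : Prop :=
  0 ≤ γ ∧ γ ≤ 1 ∧ DecomposesAt F γ ∧
    ∀ γ', 0 ≤ γ' → γ' ≤ 1 → DecomposesAt F γ' → γ' ≤ γ

/-- The profile `R^{i:yx}` obtained from `R` by swapping `x` and `y` in voter
`i`'s preference relation (used when `x` is ranked directly above `y`). -/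
def swapTop {n m : ℕ} (R : Profile n m) (i : Fin n) (x y : Fin m) : Profile n m :=
  Function.update R i ((R i).trans (Equiv.swap (R i x) (R i y)))

/-- The weight vector `b` defining the randomized Copeland rule:
`b k = 2/(m(m-1))` for `k > n/2`, `b k = 1/(m(m-1))` for `k = n/2`, `b k = 0`
for `k < n/2`. -/
def copelandWeight (n m : ℕ) (k : ℕ) : ℝ :=
  if n < 2 * k then 2 / ((m : ℝ) * ((m : ℝ) - 1))
  else if 2 * k = n then 1 / ((m : ℝ) * ((m : ℝ) - 1))
  else 0

/-- The randomized Copeland rule `f_C(R, x) = ∑_{y ≠ x} b_{n_{xy}(R)}`. -/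
def randCopeland (n m : ℕ) : Profile n m → Fin m → ℝ :=
  fun R x => ∑ y ∈ univ.filter (fun y => y ≠ x), copelandWeight n m (suppSize R x y)

/-- A point voting SDS, given by a scoring vector `a` (indexed by ranks
`0, …, m-1`, i.e. `a k` is the score of the `(k+1)`-st ranked alternative). -/
structure PointVoting (n m : ℕ) where
  a : ℕ → ℝ
  mono : ∀ k l : ℕ, k ≤ l → l < m → a l ≤ a k
  nonneg : ∀ k : ℕ, k < m → 0 ≤ a k
  sum_eq : ∑ k ∈ Finset.range m, a k = 1 / (n : ℝ)

/-- The value of a point voting SDS. -/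
def pvVal {n m : ℕ} (pv : PointVoting n m) : Profile n m → Fin m → ℝ :=
  fun R x => ∑ i, pv.a (R i x : ℕ)

/-- A supporting size SDS, given by a vector `b` indexed by supporting sizes
`0, …, n`. -/
structure SupportingSize (n m : ℕ) where
  b : ℕ → ℝ
  mono : ∀ k l : ℕ, k ≤ l → l ≤ n → b k ≤ b l
  nonneg : ∀ k : ℕ, k ≤ n → 0 ≤ b k
  pair_eq : ∀ k : ℕ, k ≤ n → b k + b (n - k) = 2 / ((m : ℝ) * ((m : ℝ) - 1))

/-- The value of a supporting size SDS. -/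
def ssVal {n m : ℕ} (S : SupportingSize n m) : Profile n m → Fin m → ℝ :=
  fun R x => ∑ y ∈ univ.filter (fun y => y ≠ x), S.b (suppSize R x y)

/-- A duple: a strategyproof SDS that puts positive probability on at most two
fixed alternatives. -/
def IsDuple {n m : ℕ} (g : Profile n m → Fin m → ℝ) : Prop :=
  IsSDS g ∧ Strategyproof g ∧ ∃ x y : Fin m, ∀ R z, z ≠ x → z ≠ y → g R z = 0

/-- A unilateral: a strategyproof SDS that depends only on the preferences of a
single fixed voter. -/
def IsUnilateral {n m : ℕ} (g : Profile n m → Fin m → ℝ) : Prop :=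
  IsSDS g ∧ Strategyproof g ∧
    ∃ i : Fin n, ∀ R R' : Profile n m, R i = R' i → g R = g R'

/-- `F` is a convex combination of SDSs satisfying the property `P`. -/
def MixOf {n m : ℕ} (P : (Profile n m → Fin m → ℝ) → Prop)
    (F : Profile n m → Fin m → ℝ) : Prop :=
  ∃ (K : ℕ) (w : Fin K → ℝ) (g : Fin K → Profile n m → Fin m → ℝ),
    (∀ k, 0 ≤ w k) ∧ ∑ k, w k = 1 ∧ (∀ k, P (g k)) ∧
    ∀ R x, F R x = ∑ k, w k * g k R x

/-- The uniform random dictatorship. -/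
def uniformRD (n m : ℕ) : Profile n m → Fin m → ℝ :=
  fun R x => (1 / (n : ℝ)) * ∑ i, dictProb R i x

/-- The uniform lottery. -/
def uniformLottery (n m : ℕ) : Profile n m → Fin m → ℝ :=
  fun _ _ => 1 / (m : ℝ)

theorem aux_upper {n m : ℕ} {F : Profile n m → Fin m → ℝ} (hF : IsSDS F)
    (hsp : Strategyproof F) (R R' : Profile n m) (i : Fin n)
    (h : ∀ j, j ≠ i → R j = R' j) (U : Finset (Fin m))
    (hU : ∀ a ∈ U, ∀ b, b ∉ U → R i a < R i b) :
    ∑ y ∈ U, F R' y ≤ ∑ y ∈ U, F R y := by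
  by_cases hne : (univ \ U).Nonempty
  · obtain ⟨x, hx, hmin⟩ := Finset.exists_min_image (univ \ U) (R i) hne
    have hx' : x ∉ U := by simpa using hx
    have : U = univ.filter (fun y => R i y < R i x) := by
      ext y
      simp only [mem_filter, mem_univ, true_and]
      constructor
      · intro hy
        exact hU y hy x hx'
      · intro hy
        by_contra hc
        exact absurd (hmin y (by simpa using hc)) (not_le.mpr hy)
    rw [this]
    exact hsp R R' i h x
  · have : U = univ := by
      ext y
      simp only [mem_univ, iff_true]
      by_contra hc
      exact hne ⟨y, by simpa using hc⟩
    rw [this, hF.2, hF.2]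

theorem dictProb_eq {n m : ℕ} (R : Profile n m) (i : Fin n) (x : Fin m) :
    dictProb R i x = if (R i x : ℕ) = 0 then 1 else 0 := by
  unfold dictProb
  have : (∀ y, R i x ≤ R i y) ↔ (R i x : ℕ) = 0 := by
    constructor
    · intro h
      have hpos : 0 < m := lt_of_le_of_lt (Nat.zero_le _) x.2
      have := h ((R i).symm ⟨0, hpos⟩)
      rw [Equiv.apply_symm_apply, Fin.le_def] at this
      simpa using this
    · intro h y
      rw [Fin.le_def, h]
      exact Nat.zero_le _
  simp only [this]

theorem sum_dictProb {n m : ℕ} (R : Profile n m) (i : Fin n) (w : Fin m)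
    (hw : (R i w : ℕ) = 0) (U : Finset (Fin m)) :
    ∑ y ∈ U, dictProb R i y = if w ∈ U then 1 else 0 := by
  have : ∀ y, dictProb R i y = if w = y then 1 else 0 := by
    intro y
    rw [dictProb_eq]
    have : (R i y : ℕ) = 0 ↔ w = y := by
      constructor
      · intro h
        exact (R i).injective (Fin.ext (hw.trans h.symm))
      · rintro rfl
        exact hw
    simp only [this]
  simp only [this, Finset.sum_ite_eq]

theorem swapTop_ne {n m : ℕ} (R : Profile n m) (i : Fin n) (x y : Fin m) (j : Fin n)
    (h : j ≠ i) : swapTop R i x y j = R j := by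
  simp [swapTop, h]

theorem swapTop_same {n m : ℕ} (R : Profile n m) (i : Fin n) (x y z : Fin m) :
    swapTop R i x y i z = Equiv.swap (R i x) (R i y) (R i z) := by
  simp [swapTop]

theorem swapTop_swapTop {n m : ℕ} (R : Profile n m) (i : Fin n) (x y : Fin m) :
    swapTop (swapTop R i x y) i y x = R := by
  funext j
  by_cases h : j = i
  · subst h
    ext z
    simp only [swapTop_same, Equiv.swap_apply_left, Equiv.swap_apply_right, Equiv.swap_apply_self]
  · rw [swapTop_ne _ _ _ _ _ h, swapTop_ne _ _ _ _ _ h]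

theorem top_of_zero {n m : ℕ} (R : Profile n m) (i : Fin n) (y z : Fin m)
    (hy : (R i y : ℕ) = 0) (hz : z ≠ y) : R i y < R i z := by
  rw [Fin.lt_def, hy]
  refine Nat.pos_of_ne_zero fun h => hz ((R i).injective (Fin.ext (h.trans hy.symm)))

theorem aux_gain {n m : ℕ} {F : Profile n m → Fin m → ℝ} (hF : IsSDS F)
    (hsp : Strategyproof F) (R R' : Profile n m) (i : Fin n)
    (h : ∀ j, j ≠ i → R j = R' j) (y : Fin m) (hy : (R i y : ℕ) = 0) :
    F R' y ≤ F R y := by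
  have := aux_upper hF hsp R R' i h {y} (by
    intro a ha b hb
    rw [mem_singleton] at ha hb
    subst ha
    exact top_of_zero R i a b hy hb)
  simpa using this

theorem swap_gain {n m : ℕ} {F : Profile n m → Fin m → ℝ} (hF : IsSDS F)
    (hsp : Strategyproof F) (R : Profile n m) (i : Fin n) (x y : Fin m)
    (hx : (R i x : ℕ) = 0) : F R y ≤ F (swapTop R i x y) y := by
  apply aux_gain hF hsp _ _ i
  · intro j hj
    exact swapTop_ne _ _ _ _ _ hj
  · rw [swapTop_same, Equiv.swap_apply_right, hx]

def CondII {n m : ℕ} (F : Profile n m → Fin m → ℝ) (gv : Fin n → ℝ) : Prop :=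
  ∀ (i : Fin n) (x y : Fin m) (R : Profile n m),
          (R i x : ℕ) = 0 → (R i y : ℕ) = 1 →
          gv i ≤ F (swapTop R i x y) y - F R y

theorem exists_rank {n m : ℕ} (R : Profile n m) (i : Fin n) (k : ℕ) (hk : k < m) :
    ∃ x, (R i x : ℕ) = k := ⟨(R i).symm ⟨k, hk⟩, by simp⟩

theorem lower_bound {n m : ℕ} (hm : 2 ≤ m) {F : Profile n m → Fin m → ℝ} (hF : IsSDS F)
    (gv : Fin n → ℝ) (h2 : CondII F gv) (x : Fin m) (k : ℕ) :
    ∀ R : Profile n m, (univ.filter (fun i => (R i x : ℕ) = 0)).card = k →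
      ∑ i ∈ univ.filter (fun i => (R i x : ℕ) = 0), gv i ≤ F R x := by
  induction k with
  | zero =>
    intro R hR
    rw [Finset.card_eq_zero] at hR
    rw [hR]
    simpa using hF.1 R x
  | succ k ih =>
    intro R hR
    have hne : (univ.filter (fun i => (R i x : ℕ) = 0)).Nonempty := by
      rw [← Finset.card_pos]; omega
    obtain ⟨i, hi⟩ := hne
    have hix : (R i x : ℕ) = 0 := by simpa using hi
    obtain ⟨y, hy⟩ := exists_rank R i 1 hm
    have hset : univ.filter (fun j => (swapTop R i x y j x : ℕ) = 0)
        = (univ.filter (fun j => (R j x : ℕ) = 0)).erase i := by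
      ext j
      by_cases hj : j = i
      · subst hj
        simp [swapTop_same, hy]
      · simp [swapTop_ne _ _ _ _ _ hj, hj]
    have h := ih (swapTop R i x y) (by rw [hset, Finset.card_erase_of_mem hi]; omega)
    rw [hset] at h
    have h' := h2 i y x (swapTop R i x y) (by simp [swapTop_same, hix]) (by simp [swapTop_same, hy])
    rw [swapTop_swapTop] at h'
    rw [← Finset.add_sum_erase _ _ hi]
    linarith

theorem lower_bound' {n m : ℕ} (hm : 2 ≤ m) {F : Profile n m → Fin m → ℝ} (hF : IsSDS F)
    (gv : Fin n → ℝ) (h2 : CondII F gv) (R : Profile n m) (x : Fin m) :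
    ∑ i, gv i * dictProb R i x ≤ F R x := by
  have := lower_bound hm hF gv h2 x _ R rfl
  rw [Finset.sum_filter] at this
  simpa [dictProb_eq] using this

theorem sum_sum_dict {n m : ℕ} (hm : 2 ≤ m) (gv : Fin n → ℝ) (R : Profile n m) :
    ∑ x, ∑ i, gv i * dictProb R i x = ∑ i, gv i := by
  rw [Finset.sum_comm]
  refine Finset.sum_congr rfl fun i _ => ?_
  obtain ⟨w, hw⟩ := exists_rank R i 0 (by omega)
  rw [← Finset.mul_sum, sum_dictProb R i w hw]
  simp

theorem cyc_lt {m : ℕ} (r a : Fin m) (h : a < r) : (Fin.cycleRange r a : ℕ) = a + 1 := by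
  exact Fin.coe_cycleRange_of_lt h

theorem key {n m : ℕ} (hm : 2 ≤ m) {F : Profile n m → Fin m → ℝ} (hF : IsSDS F)
    (hsp : Strategyproof F)
    (gv : Fin n → ℝ) (h2 : CondII F gv) (R R' : Profile n m) (i : Fin n)
    (h : ∀ j, j ≠ i → R j = R' j) (U : Finset (Fin m))
    (hU : ∀ a ∈ U, ∀ b, b ∉ U → R i a < R i b) (w z : Fin m)
    (hw : (R i w : ℕ) = 0) (hwU : w ∈ U) (hz : (R' i z : ℕ) = 0) (hzU : z ∉ U) :
    ∑ y ∈ U, F R' y + gv i ≤ ∑ y ∈ U, F R y := by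
  have hm0 : NeZero m := ⟨by omega⟩
  set p : Equiv.Perm (Fin m) := (R i).trans (Fin.cycleRange (R i z)) with hp
  have hpz : (p z : ℕ) = 0 := by
    simp [hp]
  have hpU : ∀ a ∈ U, (p a : ℕ) = R i a + 1 := by
    intro a ha
    exact cyc_lt _ _ (hU a ha z hzU)
  have hpb : ∀ b, b ≠ z → (R i b : ℕ) < R i z → (p b : ℕ) = R i b + 1 := by
    intro b _ hb
    exact cyc_lt _ _ hb
  have hpb' : ∀ b, (R i z : ℕ) < R i b → (p b : ℕ) = R i b := by
    intro b hb
    have : Fin.cycleRange (R i z) (R i b) = R i b := Fin.cycleRange_of_gt hb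
    simp [hp, this]
  have hord : ∀ a ∈ insert z U, ∀ b, b ∉ insert z U → p a < p b := by
    intro a ha b hb
    rw [mem_insert, not_or] at hb
    have hbz : (R i b : ℕ) ≠ R i z := fun hc => hb.1 ((R i).injective (Fin.ext hc))
    rw [Fin.lt_def]
    rcases Finset.mem_insert.mp ha with rfl | ha
    · rw [hpz]
      rcases lt_or_gt_of_ne hbz with h1 | h1
      · rw [hpb b hb.1 h1]; omega
      · rw [hpb' b h1]; omega
    · have h3 := hU a ha b hb.2
      have h4 := hU a ha z hzU
      rw [Fin.lt_def] at h3 h4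
      rw [hpU a ha]
      rcases lt_or_gt_of_ne hbz with h1 | h1
      · rw [hpb b hb.1 h1]; omega
      · rw [hpb' b h1]; omega
  set P' : Profile n m := Function.update R i p with hP'
  have hP'i : P' i = p := by simp [hP']
  have hP'j : ∀ j, j ≠ i → P' j = R j := by
    intro j hj
    simp [hP', hj]
  have hpw : (p w : ℕ) = 1 := by rw [hpU w hwU, hw]
  set P : Profile n m := swapTop P' i z w with hP
  have hPj : ∀ j, j ≠ i → P j = R j := by
    intro j hj
    rw [hP, swapTop_ne _ _ _ _ _ hj, hP'j j hj]
  have hPi : ∀ a, P i a = Equiv.swap (p z) (p w) (p a) := by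
    intro a
    rw [hP, swapTop_same, hP'i]
  have hPord : ∀ a ∈ insert z U, ∀ b, b ∉ insert z U → P i a < P i b := by
    intro a ha b hb
    have h1 := hord a ha b hb
    have h2 := hord z (mem_insert_self _ _) b hb
    have h3 := hord w (mem_insert_of_mem hwU) b hb
    rw [hPi, hPi, Equiv.swap_apply_of_ne_of_ne h2.ne' h3.ne']
    rw [Equiv.swap_apply_def]
    split_ifs
    · exact h3
    · exact h2
    · exact h1
  have hc := h2 i w z P (by rw [hPi]; simp [hpz]) (by rw [hPi]; simp [hpw])
  rw [hP, swapTop_swapTop, ← hP] at hc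
  -- comparisons
  have e1 := aux_upper hF hsp R P i (fun j hj => (hPj j hj).symm) U hU
  have e2 := aux_upper hF hsp P P' i (fun j hj => (hPj j hj).trans (hP'j j hj).symm)
    (insert z U) hPord
  have e3 := aux_upper hF hsp P' R' i (fun j hj => (hP'j j hj).trans (h j hj))
    (insert z U) (by rw [hP'i]; exact hord)
  have e4 := aux_gain hF hsp R' P' i (fun j hj => ((hP'j j hj).trans (h j hj)).symm) z hz
  rw [Finset.sum_insert hzU, Finset.sum_insert hzU] at e2 e3
  linarith

theorem rem_sp {n m : ℕ} (hm : 2 ≤ m) {F : Profile n m → Fin m → ℝ} (hF : IsSDS F)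
    (hsp : Strategyproof F) (gv : Fin n → ℝ) (h0 : ∀ i, 0 ≤ gv i) (h2 : CondII F gv) :
    Strategyproof (fun R x => F R x - ∑ i, gv i * dictProb R i x) := by
  intro R R' i h x
  set U := univ.filter (fun y => R i y < R i x) with hUdef
  have hU : ∀ a ∈ U, ∀ b, b ∉ U → R i a < R i b := by
    intro a ha b hb
    simp only [hUdef, mem_filter, mem_univ, true_and, not_lt] at ha hb
    exact lt_of_lt_of_le ha hb
  by_cases hne : U.Nonempty
  swap
  · rw [Finset.not_nonempty_iff_eq_empty] at hne
    rw [hne]; simp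
  obtain ⟨a, ha⟩ := hne
  obtain ⟨w, hw⟩ := exists_rank R i 0 (by omega)
  obtain ⟨z, hz⟩ := exists_rank R' i 0 (by omega)
  have hwU : w ∈ U := by
    by_contra hc
    have := hU a ha w hc
    rw [Fin.lt_def] at this
    omega
  have hs : ∀ Q : Profile n m, ∑ y ∈ U, ∑ j, gv j * dictProb Q j y
      = gv i * ∑ y ∈ U, dictProb Q i y
        + ∑ j ∈ univ.erase i, gv j * ∑ y ∈ U, dictProb Q j y := by
    intro Q
    rw [Finset.sum_comm, ← Finset.add_sum_erase _ _ (mem_univ i), Finset.mul_sum]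
    simp only [Finset.mul_sum]
  have hrest : ∑ j ∈ univ.erase i, gv j * ∑ y ∈ U, dictProb R j y
      = ∑ j ∈ univ.erase i, gv j * ∑ y ∈ U, dictProb R' j y := by
    refine Finset.sum_congr rfl fun j hj => ?_
    have := h j (Finset.ne_of_mem_erase hj)
    simp only [dictProb, this]
  simp only [Finset.sum_sub_distrib]
  rw [hs, hs, hrest, sum_dictProb R i w hw, sum_dictProb R' i z hz, if_pos hwU]
  split_ifs with hzU
  · have := aux_upper hF hsp R R' i h U hU
    linarith
  · have := key hm hF hsp gv h2 R R' i h U hU w z hw hwU hz hzU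
    linarith

theorem lemA {n m : ℕ} (hn : 1 ≤ n) (hm : 2 ≤ m) {F : Profile n m → Fin m → ℝ} (hF : IsSDS F)
    (hsp : Strategyproof F) (gv : Fin n → ℝ) (h0 : ∀ i, 0 ≤ gv i) (h2 : CondII F gv) :
    ∑ i, gv i ≤ 1 ∧ DecomposesAt F (∑ i, gv i) := by
  have hle : ∑ i, gv i ≤ 1 := by
    let R : Profile n m := fun _ => Equiv.refl _
    rw [← sum_sum_dict hm gv R, ← hF.2 R]
    exact Finset.sum_le_sum fun x _ => lower_bound' hm hF gv h2 R x
  refine ⟨hle, ?_⟩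
  set G := ∑ i, gv i with hG
  have hG0 : 0 ≤ G := Finset.sum_nonneg fun i _ => h0 i
  by_cases hz : G = 0
  · refine ⟨fun R x => dictProb R ⟨0, hn⟩ x, F, ⟨Pi.single ⟨0, hn⟩ 1, ?_, ?_, ?_⟩, hF, hsp, ?_⟩
    · intro i
      by_cases hi : i = ⟨0, hn⟩
      · subst hi; simp
      · simp [Pi.single_apply, hi]
    · simp
    · intro R x
      simp [Pi.single_apply]
    · intro R x
      rw [hz]; ring
  have hd : IsRandDict (fun (R : Profile n m) x => ∑ i, (gv i / G) * dictProb R i x) := by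
    refine ⟨fun i => gv i / G, fun i => div_nonneg (h0 i) hG0, ?_, fun R x => rfl⟩
    rw [← Finset.sum_div, ← hG, div_self hz]
  have hGd : ∀ (R : Profile n m) x, G * ∑ i, (gv i / G) * dictProb R i x
      = ∑ i, gv i * dictProb R i x := by
    intro R x
    rw [Finset.mul_sum]
    refine Finset.sum_congr rfl fun i _ => ?_
    field_simp
  by_cases h1 : G = 1
  · refine ⟨_, F, hd, hF, hsp, ?_⟩
    intro R x
    rw [hGd, h1]
    have hsum : ∑ x, ∑ i, gv i * dictProb R i x = ∑ x, F R x := by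
      rw [sum_sum_dict hm, hF.2, ← hG, h1]
    have := (Finset.sum_eq_sum_iff_of_le
      (fun x _ => lower_bound' hm hF gv h2 R x)).mp hsum x (mem_univ x)
    rw [this]; ring
  · have hpos : 0 < 1 - G := by
      have := lt_of_le_of_ne hle h1
      linarith
    refine ⟨_, fun R x => (F R x - ∑ i, gv i * dictProb R i x) / (1 - G), hd, ⟨?_, ?_⟩, ?_, ?_⟩
    · intro R x
      have := lower_bound' hm hF gv h2 R x
      exact div_nonneg (by linarith) hpos.le
    · intro R
      rw [← Finset.sum_div, Finset.sum_sub_distrib, hF.2, sum_sum_dict hm, ← hG,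
        div_self hpos.ne']
    · intro R R' i h x
      have := rem_sp hm hF hsp gv h0 h2 R R' i h x
      rw [← Finset.sum_div, ← Finset.sum_div]
      exact div_le_div_of_nonneg_right this hpos.le
    · intro R x
      rw [hGd]
      field_simp
      ring

theorem lemB {n m : ℕ} {F : Profile n m → Fin m → ℝ} (γ : ℝ) (h0 : 0 ≤ γ) (h1 : γ ≤ 1)
    (hd : DecomposesAt F γ) :
    ∃ gv : Fin n → ℝ, ∑ i, gv i = γ ∧ CondII F gv := by
  obtain ⟨d, g, ⟨δ, hδ0, hδ1, hd⟩, hg, hgs, hdec⟩ := hd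
  refine ⟨fun i => γ * δ i, by rw [← Finset.mul_sum, hδ1, mul_one], ?_⟩
  intro i x y R hx hy
  have h3 := swap_gain hg hgs R i x y hx
  have h4 : d (swapTop R i x y) y - d R y = δ i := by
    rw [hd, hd, ← Finset.sum_sub_distrib, Finset.sum_eq_single i]
    · rw [dictProb_eq, dictProb_eq, swapTop_same]
      simp [hx, hy]
    · intro j _ hj
      simp [dictProb, swapTop_ne _ _ _ _ _ hj]
    · simp
  show γ * δ i ≤ _
  rw [hdec, hdec, ← h4]
  have := mul_le_mul_of_nonneg_left h3 (sub_nonneg.mpr h1)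
  linarith

theorem lemC {n m : ℕ} (hm : 2 ≤ m) {F : Profile n m → Fin m → ℝ} (hF : IsSDS F)
    (hsp : Strategyproof F) :
    ∃ gv : Fin n → ℝ, (∀ i, 0 ≤ gv i) ∧ CondII F gv ∧
      (∀ i : Fin n, ∃ (x y : Fin m) (R : Profile n m),
          (R i x : ℕ) = 0 ∧ (R i y : ℕ) = 1 ∧
          F (swapTop R i x y) y - F R y = gv i) := by
  have : ∀ i : Fin n, ∃ c : ℝ, 0 ≤ c ∧ (∀ (x y : Fin m) (R : Profile n m),
          (R i x : ℕ) = 0 → (R i y : ℕ) = 1 →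
          c ≤ F (swapTop R i x y) y - F R y) ∧ ∃ (x y : Fin m) (R : Profile n m),
          (R i x : ℕ) = 0 ∧ (R i y : ℕ) = 1 ∧
          F (swapTop R i x y) y - F R y = c := by
    intro i
    let S : Finset (Fin m × Fin m × Profile n m) :=
      univ.filter (fun t => (t.2.2 i t.1 : ℕ) = 0 ∧ (t.2.2 i t.2.1 : ℕ) = 1)
    have hS : S.Nonempty := by
      let R : Profile n m := fun _ => Equiv.refl _
      exact ⟨(⟨0, by omega⟩, ⟨1, by omega⟩, R), by simp [S, R]⟩
    obtain ⟨t, ht, hmin⟩ := Finset.exists_min_image S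
      (fun t => F (swapTop t.2.2 i t.1 t.2.1) t.2.1 - F t.2.2 t.2.1) hS
    have ht' : (t.2.2 i t.1 : ℕ) = 0 ∧ (t.2.2 i t.2.1 : ℕ) = 1 := by simpa [S] using ht
    refine ⟨_, ?_, ?_, t.1, t.2.1, t.2.2, ht'.1, ht'.2, rfl⟩
    · have := swap_gain hF hsp t.2.2 i t.1 t.2.1 ht'.1
      linarith
    · intro x y R hx hy
      exact hmin (x, y, R) (by simp [S, hx, hy])
  choose c hc0 hc2 hc3 using this
  exact ⟨c, hc0, hc2, hc3⟩

/-- A strategyproof SDS `F` is `γ`-randomly dictatorial iff there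
are nonnegative reals `γ_1, …, γ_n` summing to `γ` such that (ii) whenever
voter `i` ranks `x` first and `y` second, pushing `y` to the top increases the
probability of `y` by at least `γ_i`, and (iii) for every voter `i` this bound
is attained for some profile and alternatives. -/
theorem randDictDegree_iff (n m : ℕ) (hn : 1 ≤ n) (hm : 2 ≤ m)
    (F : Profile n m → Fin m → ℝ) (hF : IsSDS F) (hsp : Strategyproof F)
    (γ : ℝ) :
    RandDictDegree F γ ↔
      ∃ gv : Fin n → ℝ, (∀ i, 0 ≤ gv i) ∧ ∑ i, gv i = γ ∧
        (∀ (i : Fin n) (x y : Fin m) (R : Profile n m),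
          (R i x : ℕ) = 0 → (R i y : ℕ) = 1 →
          gv i ≤ F (swapTop R i x y) y - F R y) ∧
        (∀ i : Fin n, ∃ (x y : Fin m) (R : Profile n m),
          (R i x : ℕ) = 0 ∧ (R i y : ℕ) = 1 ∧
          F (swapTop R i x y) y - F R y = gv i) := by
  have max : ∀ gv : Fin n → ℝ, (∀ i : Fin n, ∃ (x y : Fin m) (R : Profile n m),
          (R i x : ℕ) = 0 ∧ (R i y : ℕ) = 1 ∧
          F (swapTop R i x y) y - F R y = gv i) →
      ∀ γ', 0 ≤ γ' → γ' ≤ 1 → DecomposesAt F γ' → γ' ≤ ∑ i, gv i := by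
    intro gv h3 γ' h0 h1 hd
    obtain ⟨c, hc, hc2⟩ := lemB γ' h0 h1 hd
    rw [← hc]
    refine Finset.sum_le_sum fun i _ => ?_
    obtain ⟨x, y, R, hx, hy, he⟩ := h3 i
    rw [← he]
    exact hc2 i x y R hx hy
  constructor
  · rintro ⟨h0, h1, hd, hmax⟩
    obtain ⟨c, hc0, hc2, hc3⟩ := lemC hm hF hsp
    refine ⟨c, hc0, ?_, hc2, hc3⟩
    obtain ⟨hle, hdec⟩ := lemA hn hm hF hsp c hc0 hc2
    exact le_antisymm (hmax _ (Finset.sum_nonneg fun i _ => hc0 i) hle hdec)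
      (max c hc3 γ h0 h1 hd)
  · rintro ⟨c, hc0, rfl, hc2, hc3⟩
    obtain ⟨hle, hdec⟩ := lemA hn hm hF hsp c hc0 hc2
    exact ⟨Finset.sum_nonneg fun i _ => hc0 i, hle, hdec, max c hc3⟩
end
end

section
/- Let m ≥ 3 and n ≥ 3. No point voting SDS is α-Condorcet-consistent for any α ≥ 2/m; that is, for every point voting SDS f there exist a profile R and an alternative x that is the Condorcet winner in R such that f(R,x) < 2/m. -/
open Finset

noncomputable section

theorem aux_perm {m : ℕ} (S : Finset (Fin m)) (x : Fin m) (hx : x ∉ S) :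
    ∃ σ : Equiv.Perm (Fin m), (σ x : ℕ) = S.card ∧ ∀ y, σ y < σ x ↔ y ∈ S := by
  classical
  have hc : S.card < m := by
    have := Finset.card_lt_card (Finset.ssubset_univ_iff.mpr (fun h => hx (h ▸ Finset.mem_univ x)) : S ⊂ Finset.univ)
    simpa using this
  have hcard : Fintype.card {y // y ∈ S} = Fintype.card {k : Fin m // (k : ℕ) < S.card} := by
    rw [Fintype.card_coe, Fintype.card_subtype, Fin.card_filter_val_lt]
    omega
  let e := Fintype.equivOfCardEq hcard
  let τ : Equiv.Perm (Fin m) := e.extendSubtype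
  have h1 : ∀ y, y ∈ S → (τ y : ℕ) < S.card := fun y hy => e.extendSubtype_mem y hy
  have h2 : ∀ y, y ∉ S → ¬ (τ y : ℕ) < S.card := fun y hy => e.extendSubtype_not_mem y hy
  let c : Fin m := ⟨S.card, hc⟩
  refine ⟨τ.trans (Equiv.swap (τ x) c), by simp [c], fun y => ?_⟩
  have hxx : (τ.trans (Equiv.swap (τ x) c)) x = c := by simp
  rw [hxx]
  simp only [Equiv.trans_apply]
  have hx2 := h2 x hx
  constructor
  · intro h
    by_contra hy
    have hy2 := h2 y hy
    rw [Equiv.swap_apply_def] at h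
    split_ifs at h with ha hb
    · exact lt_irrefl _ h
    · exact hx2 (by simpa [c, Fin.lt_def] using h)
    · exact hy2 (by simpa [c, Fin.lt_def] using h)
  · intro hy
    have hy1 := h1 y hy
    rw [Equiv.swap_apply_of_ne_of_ne]
    · simpa [c, Fin.lt_def] using hy1
    · intro h; rw [h] at hy1; exact hx2 hy1
    · intro h; rw [h] at hy1; simp [c] at hy1

def auxI (m p q : ℕ) : Finset (Fin m) := univ.filter (fun y => p ≤ (y : ℕ) ∧ (y : ℕ) < q)

theorem auxI_card {m p q : ℕ} (h : q ≤ m) : (auxI m p q).card = q - p := by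
  rw [← Nat.card_Ico, ← Finset.card_map Fin.valEmbedding]
  congr 1
  ext k
  simp only [auxI, Finset.mem_map, Finset.mem_filter, Finset.mem_univ, true_and, Finset.mem_Ico,
    Fin.valEmbedding_apply]
  constructor
  · rintro ⟨y, hy, rfl⟩; exact hy
  · intro hk; exact ⟨⟨k, by omega⟩, hk, rfl⟩

theorem aux_pair (a : ℕ → ℝ) (m N : ℕ) (hN : 1 ≤ N) (hNm : N ≤ m) (ha : ∀ k < m, 0 ≤ a k) :
    ∃ r < N, (N : ℝ) * (a r + a (N - 1 - r)) ≤ 2 * ∑ k ∈ range m, a k := by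
  have hs : ∑ k ∈ range N, a k ≤ ∑ k ∈ range m, a k := by
    apply Finset.sum_le_sum_of_subset_of_nonneg
    · intro k hk; simp at hk ⊢; omega
    · intro k hk _; exact ha k (by simpa using hk)
  have hsum : ∑ r ∈ range N, (N : ℝ) * (a r + a (N - 1 - r)) ≤
      ∑ r ∈ range N, 2 * ∑ k ∈ range m, a k := by
    rw [← Finset.mul_sum, Finset.sum_add_distrib, Finset.sum_range_reflect, Finset.sum_const,
      Finset.card_range, nsmul_eq_mul]
    have : (0:ℝ) ≤ N := by positivity
    apply mul_le_mul_of_nonneg_left _ this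
    linarith
  obtain ⟨r, hr, h⟩ := Finset.exists_le_of_sum_le ⟨0, by simp; omega⟩ hsum
  exact ⟨r, by simpa using hr, h⟩

def auxG (m : ℕ) (a : ℕ → ℝ) (k : ℕ) : Prop :=
  ∃ S : Fin k → Finset (Fin m), (∀ i y, y ∈ S i → (y : ℕ) ≠ 0) ∧
    (∀ y, 2 * (univ.filter (fun i => y ∈ S i)).card < k) ∧
    (m : ℝ) * ∑ i, a (S i).card < 2 * k * ∑ k ∈ range m, a k

theorem aux_four (m : ℕ) (hm : 3 ≤ m) (a : ℕ → ℝ) (ha : ∀ k < m, 0 ≤ a k)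
    (hc : 0 < ∑ k ∈ range m, a k) :
    ∃ S : Fin 4 → Finset (Fin m), (∀ i y, y ∈ S i → (y : ℕ) ≠ 0) ∧
    (∀ y, (univ.filter (fun i => y ∈ S i)).card ≤ 1) ∧
    (m : ℝ) * ∑ i, a (S i).card < 8 * ∑ k ∈ range m, a k := by
  obtain ⟨M, hM⟩ : ∃ M, M = (m + 1) / 2 := ⟨_, rfl⟩
  obtain ⟨M', hM'⟩ : ∃ M', M' = m / 2 + 1 := ⟨_, rfl⟩
  obtain ⟨r, hr, h1⟩ := aux_pair a m M (by omega) (by omega) ha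
  obtain ⟨s, hs, h2⟩ := aux_pair a m M' (by omega) (by omega) ha
  refine ⟨![auxI m 1 (r+1), auxI m (r+1) M, auxI m M (M+s), auxI m (M+s) m], ?_, ?_, ?_⟩
  · intro i y
    fin_cases i <;> simp [auxI] <;> omega
  · intro y
    rw [Finset.card_filter, Fin.sum_univ_four]
    simp only [Matrix.cons_val, auxI, Finset.mem_filter, Finset.mem_univ, true_and]
    split_ifs <;> omega
  · rw [Fin.sum_univ_four]
    simp only [Matrix.cons_val]
    rw [auxI_card (by omega), auxI_card (by omega), auxI_card (by omega), auxI_card le_rfl]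
    have e1 : r + 1 - 1 = r := by omega
    have e2 : M - (r+1) = M - 1 - r := by omega
    have e3 : M + s - M = s := by omega
    have e4 : m - (M + s) = M' - 1 - s := by omega
    rw [e1, e2, e3, e4]
    have p1 := ha r (by omega)
    have p2 := ha (M - 1 - r) (by omega)
    have p3 := ha s (by omega)
    have p4 := ha (M' - 1 - s) (by omega)
    have q1 : (m : ℝ) ≤ 2 * M := by exact_mod_cast (by omega : m ≤ 2 * M)
    have q2 : (m : ℝ) + 1 ≤ 2 * M' := by exact_mod_cast (by omega : m + 1 ≤ 2 * M')
    generalize ∑ k ∈ range m, a k = c at *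
    have hA : 0 ≤ a r + a (M - 1 - r) := by linarith
    have hB : 0 ≤ a s + a (M' - 1 - s) := by linarith
    have k1 := mul_le_mul_of_nonneg_right q1 hA
    have k2 := mul_le_mul_of_nonneg_right q2 hB
    have k3 : (m : ℝ) * (a s + a (M' - 1 - s)) < 4 * c := by
      rcases hB.eq_or_lt with h | h
      · rw [← h]; linarith
      · linarith
    linarith

theorem auxG_four (m : ℕ) (hm : 3 ≤ m) (a : ℕ → ℝ) (ha : ∀ k < m, 0 ≤ a k)
    (hc : 0 < ∑ k ∈ range m, a k) : auxG m a 4 := by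
  obtain ⟨S, h1, h2, h3⟩ := aux_four m hm a ha hc
  refine ⟨S, h1, fun y => by have := h2 y; omega, ?_⟩
  push_cast; linarith

theorem auxG_three (m : ℕ) (hm : 3 ≤ m) (a : ℕ → ℝ) (ha : ∀ k < m, 0 ≤ a k)
    (hc : 0 < ∑ k ∈ range m, a k) : auxG m a 3 := by
  obtain ⟨S, h1, h2, h3⟩ := aux_four m hm a ha hc
  obtain ⟨j, hj⟩ := Finite.exists_max (fun i => a (S i).card)
  refine ⟨fun i => S (j.succAbove i), fun i => h1 _, fun y => ?_, ?_⟩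
  · have : (univ.filter (fun i => y ∈ S (j.succAbove i))).card ≤
        (univ.filter (fun i => y ∈ S i)).card := by
      apply Finset.card_le_card_of_injOn j.succAbove
      · intro i hi; simpa using hi
      · exact (Fin.succAbove_right_injective).injOn
    have := h2 y
    dsimp only
    omega
  · rw [Fin.sum_univ_succAbove _ j] at h3
    have : ∑ i : Fin 3, a (S (j.succAbove i)).card ≤ 3 * a (S j).card := by
      rw [Fin.sum_univ_three]
      linarith [hj (j.succAbove 0), hj (j.succAbove 1), hj (j.succAbove 2)]
    have := mul_le_mul_of_nonneg_left this (Nat.cast_nonneg (α := ℝ) m)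
    push_cast
    linarith

theorem auxG_step (m : ℕ) (hm : 3 ≤ m) (a : ℕ → ℝ) (ha : ∀ k < m, 0 ≤ a k)
    (hc : 0 < ∑ k ∈ range m, a k) (k : ℕ) (h : auxG m a k) : auxG m a (k + 2) := by
  obtain ⟨S, h1, h2, h3⟩ := h
  obtain ⟨r, hr, hp⟩ := aux_pair a m m (by omega) le_rfl ha
  refine ⟨Fin.cons (auxI m 1 (r+1)) (Fin.cons (auxI m (r+1) m) S : Fin (k+1) → _), ?_, ?_, ?_⟩
  · intro i y
    refine Fin.cases ?_ (fun i => Fin.cases ?_ (fun i => ?_) i) i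
    · simp [auxI]; omega
    · simp [auxI]; omega
    · simpa using h1 i y
  · intro y
    have := h2 y
    rw [Finset.card_filter] at this ⊢
    rw [Fin.sum_univ_succ, Fin.sum_univ_succ]
    simp only [Fin.cons_zero, Fin.cons_succ]
    have : (if y ∈ auxI m 1 (r+1) then 1 else 0) + (if y ∈ auxI m (r+1) m then 1 else 0) ≤ 1 := by
      simp only [auxI, Finset.mem_filter, Finset.mem_univ, true_and]
      split_ifs <;> omega
    omega
  · rw [Fin.sum_univ_succ, Fin.sum_univ_succ]
    simp only [Fin.cons_zero, Fin.cons_succ]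
    rw [auxI_card (by omega), auxI_card le_rfl]
    have e1 : r + 1 - 1 = r := by omega
    have e2 : m - (r+1) = m - 1 - r := by omega
    rw [e1, e2]
    push_cast
    linarith

theorem auxG_all (m : ℕ) (hm : 3 ≤ m) (a : ℕ → ℝ) (ha : ∀ k < m, 0 ≤ a k)
    (hc : 0 < ∑ k ∈ range m, a k) (k : ℕ) : auxG m a (k + 3) ∧ auxG m a (k + 4) := by
  induction k with
  | zero => exact ⟨auxG_three m hm a ha hc, auxG_four m hm a ha hc⟩
  | succ k ih => exact ⟨ih.2, auxG_step m hm a ha hc _ ih.1⟩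

/-- For `m ≥ 3` and `n ≥ 3`, no point voting SDS is
`α`-Condorcet-consistent for any `α ≥ 2/m`: there is always a profile with a
Condorcet winner receiving probability `< 2/m`. -/
theorem pointVoting_not_condorcet_consistent (n m : ℕ) (hm : 3 ≤ m) (hn : 3 ≤ n)
    (pv : PointVoting n m) :
    ∃ (R : Profile n m) (x : Fin m),
      CondorcetWinner R x ∧ pvVal pv R x < 2 / (m : ℝ) := by
  have hn0 : (0 : ℝ) < n := by exact_mod_cast (by omega : 0 < n)
  have hm0 : (0 : ℝ) < m := by exact_mod_cast (by omega : 0 < m)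
  have hc : 0 < ∑ k ∈ range m, pv.a k := by rw [pv.sum_eq]; positivity
  have hG : auxG m pv.a n := by
    have := (auxG_all m hm pv.a pv.nonneg hc (n - 3)).1
    rwa [show n - 3 + 3 = n by omega] at this
  obtain ⟨S, h1, h2, h3⟩ := hG
  let x : Fin m := ⟨0, by omega⟩
  choose R hR1 hR2 using fun i => aux_perm (S i) x (fun h => h1 i x h rfl)
  refine ⟨R, x, ?_, ?_⟩
  · intro y hy
    have e1 : suppSize R y x = (univ.filter (fun i => y ∈ S i)).card := by
      simp only [suppSize, hR2]
    have e2 : suppSize R x y = (univ.filter (fun i => ¬ y ∈ S i)).card := by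
      simp only [suppSize, ← hR2]
      congr 1
      ext i
      have : R i y ≠ R i x := fun h => hy ((R i).injective h)
      simp only [Finset.mem_filter, Finset.mem_univ, true_and, not_lt]
      exact ⟨le_of_lt, fun h => lt_of_le_of_ne h this.symm⟩
    have e3 := Finset.card_filter_add_card_filter_not (s := (univ : Finset (Fin n))) (fun i => y ∈ S i)
    rw [Finset.card_univ, Fintype.card_fin] at e3
    have := h2 y
    omega
  · have : pvVal pv R x = ∑ i, pv.a (S i).card := by
      simp only [pvVal, hR1]
    rw [this, lt_div_iff₀ hm0, mul_comm]
    rw [pv.sum_eq, mul_one_div, mul_div_assoc, div_self hn0.ne', mul_one] at h3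
    exact h3
end
end
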